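/- arXiv:2412.04961 — 2 statements merged into one kernel-verified Lean document; each statement's English description precedes it below -/
import Mathlib

section
/- Let (E^•, I_•, ∫) be a Cheeger–Simons model over 𝕂 and k ≥ 0. For every f ∈ Diff^k(CS) there is a unique ω ∈ E^{k+1} such that f(∂β) ≡ ∫_β ω (mod ℤ) for all β ∈ I_{k+1}; moreover this ω lies in E^{k+1}_0, and the resulting map δ₁ : Diff^k(CS) → E^{k+1}_0, f ↦ ω, is a surjective group homomorphism. -/
open AddSubgroup

noncomputable section

/-- Cycles of an `ℕ`-indexed chain complex, with the convention `Z_0 = I_0`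
(i.e. `∂ : I_0 → I_{-1} = 0`). -/
def Zc {I : ℕ → Type*} [∀ i, AddCommGroup (I i)] (bd : ∀ k, I (k+1) →+ I k) :
    ∀ k, AddSubgroup (I k)
  | 0 => ⊤
  | n+1 => (bd n).ker

theorem mem_Zc_bd {I : ℕ → Type*} [∀ i, AddCommGroup (I i)] (bd : ∀ k, I (k+1) →+ I k)
    (hbd : ∀ k x, bd k (bd (k+1) x) = 0) :
    ∀ (k : ℕ) (β : I (k+1)), bd k β ∈ Zc bd k
  | 0, _ => mem_top _
  | n+1, β => by simpa [Zc, AddMonoidHom.mem_ker] using hbd n β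

/-- Coboundaries of an `ℕ`-indexed cochain complex, with the convention
`B^0 = 0`. -/
def Bc {E : ℕ → Type*} [∀ i, AddCommGroup (E i)] (d : ∀ k, E k →+ E (k+1)) :
    ∀ k, AddSubgroup (E k)
  | 0 => ⊥
  | n+1 => (d n).range

/-- Cohomology of an `ℕ`-indexed cochain complex. -/
abbrev Hc {E : ℕ → Type*} [∀ i, AddCommGroup (E i)] (d : ∀ k, E k →+ E (k+1)) (k : ℕ) :=
  ↥(d k).ker ⧸ ((Bc d k).addSubgroupOf (d k).ker)

/-- The class of a cocycle in cohomology. -/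
def Hmk {E : ℕ → Type*} [∀ i, AddCommGroup (E i)] (d : ∀ k, E k →+ E (k+1)) (k : ℕ) :
    ↥(d k).ker →+ Hc d k := QuotientAddGroup.mk' _

/-- The codifferential on `Hom(I_•, A)` induced by the boundary map of `I_•`. -/
def codiff {I : ℕ → Type*} [∀ i, AddCommGroup (I i)] (bd : ∀ k, I (k+1) →+ I k)
    (A : Type*) [AddCommGroup A] (k : ℕ) : (I k →+ A) →+ (I (k+1) →+ A) :=
  AddMonoidHom.mk' (fun h => h.comp (bd k)) (fun h g => by ext x; simp)

/-- `ℤ` regarded as an additive subgroup of `𝕂`. -/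
def intSub (𝕂 : Type*) [Field 𝕂] : AddSubgroup 𝕂 := zmultiples (1 : 𝕂)

/-- The group `𝕂/ℤ`. -/
abbrev KmodZ (𝕂 : Type*) [Field 𝕂] := 𝕂 ⧸ intSub 𝕂

/-- The quotient map `q : 𝕂 → 𝕂/ℤ`. -/
def qZ (𝕂 : Type*) [Field 𝕂] : 𝕂 →+ KmodZ 𝕂 := QuotientAddGroup.mk' _

/-- The inclusion `Φ : Hom(I_k, ℤ) → Hom(I_k, 𝕂)`. -/
def PhiMap {I : ℕ → Type*} [∀ i, AddCommGroup (I i)] (𝕂 : Type*) [Field 𝕂] (k : ℕ) :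
    (I k →+ ℤ) →+ (I k →+ 𝕂) :=
  AddMonoidHom.mk' (fun h => (Int.castAddHom 𝕂).comp h) (fun a b => by ext x; simp)

/-- The differential character group `Diff^k` of a Cheeger–Simons model. -/
def DiffChar {𝕂 : Type*} [Field 𝕂] {I E : ℕ → Type*}
    [∀ i, AddCommGroup (I i)] [∀ i, AddCommGroup (E i)]
    (bd : ∀ k, I (k+1) →+ I k) (hbd : ∀ k x, bd k (bd (k+1) x) = 0)
    (pair : ∀ k, E k →+ (I k →+ 𝕂)) (k : ℕ) :
    AddSubgroup ((Zc bd k) →+ KmodZ 𝕂) where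
  carrier := {f | ∃ ω : E (k+1), ∀ β : I (k+1),
      f ⟨bd k β, mem_Zc_bd bd hbd k β⟩ = qZ 𝕂 (pair (k+1) ω β)}
  add_mem' := by
    rintro f g ⟨ω, hω⟩ ⟨ω', hω'⟩
    exact ⟨ω + ω', fun β => by
      simp [AddMonoidHom.add_apply, hω β, hω' β]⟩
  zero_mem' := ⟨0, fun β => by simp [qZ]⟩
  neg_mem' := by
    rintro f ⟨ω, hω⟩
    exact ⟨-ω, fun β => by simp [AddMonoidHom.neg_apply, hω β]⟩

/-- The subgroup `E^k_0` of closed elements of `E^k` with integral periods. -/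
def Ezero {𝕂 : Type*} [Field 𝕂] {I E : ℕ → Type*}
    [∀ i, AddCommGroup (I i)] [∀ i, AddCommGroup (E i)]
    (bd : ∀ k, I (k+1) →+ I k) (d : ∀ k, E k →+ E (k+1))
    (pair : ∀ k, E k →+ (I k →+ 𝕂)) (k : ℕ) : AddSubgroup (E k) where
  carrier := {ω | d k ω = 0 ∧ ∀ α ∈ Zc bd k, pair k ω α ∈ intSub 𝕂}
  add_mem' := by
    rintro ω ω' ⟨h1, h2⟩ ⟨h1', h2'⟩
    refine ⟨by simp [h1, h1'], fun α hα => ?_⟩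
    simpa [AddMonoidHom.add_apply] using add_mem (h2 α hα) (h2' α hα)
  zero_mem' := ⟨by simp, fun α _ => by simp [zero_mem]⟩
  neg_mem' := by
    rintro ω ⟨h1, h2⟩
    exact ⟨by simp [h1], fun α hα => by
      simpa [AddMonoidHom.neg_apply] using neg_mem (h2 α hα)⟩

/-!
Integrals determine forms modulo `ℤ`: if `∫_β (ω - ω')` is an integer for every chain `β`, then
`ω = ω'`. Hence the form attached to a differential character is unique, and so additive in the
character. Evaluating the character at `∂α = 0` shows that the form has integral periods, and then
it is closed because `∫_β dω = ∫_{∂β} ω` is an integer for every `β`.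

For surjectivity, integrality of the periods of `ω` says that `β ↦ ∫_β ω mod ℤ` vanishes on the
kernel of `∂ : I_{k+1} → Z_k`, so it descends to the boundaries, and it extends from there to all
cycles because `𝕂/ℤ`, a quotient of a divisible group, is an injective abelian group.
-/

section DivisibleTarget

variable {G H A : Type*} [AddCommGroup G] [AddCommGroup H] [AddCommGroup A]

theorem exists_comp_eq_of_ker_le [DivisibleBy A ℤ] (f : G →+ H) (g : G →+ A)
    (hker : f.ker ≤ g.ker) : ∃ F : H →+ A, F.comp f = g := by
  obtain ⟨F, hF⟩ := (Module.Baer.of_divisible A).extension_property_addMonoidHom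
    (QuotientAddGroup.kerLift f) (QuotientAddGroup.kerLift_injective f)
    (QuotientAddGroup.lift f.ker g hker)
  exact ⟨F, AddMonoidHom.ext fun x => DFunLike.congr_fun hF (QuotientAddGroup.mk x)⟩

end DivisibleTarget

theorem qZ_eq_zero_iff {𝕂 : Type*} [Field 𝕂] {x : 𝕂} : qZ 𝕂 x = 0 ↔ x ∈ intSub 𝕂 :=
  QuotientAddGroup.eq_zero_iff x

instance KmodZ.instDivisibleByInt {𝕂 : Type*} [Field 𝕂] [CharZero 𝕂] : DivisibleBy (KmodZ 𝕂) ℤ :=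
  QuotientAddGroup.mk_surjective.divisibleBy (QuotientAddGroup.mk : 𝕂 → KmodZ 𝕂) fun _ _ => rfl

section Curvature

variable {𝕂 : Type*} [Field 𝕂] {I E : ℕ → Type*}
  [∀ i, AddCommGroup (I i)] [∀ i, AddCommGroup (E i)]
  {bd : ∀ k, I (k + 1) →+ I k} {k : ℕ}

theorem mem_Ezero_iff {d : ∀ k, E k →+ E (k + 1)} {pair : ∀ k, E k →+ (I k →+ 𝕂)}
    (hbd : ∀ k x, bd k (bd (k + 1) x) = 0)
    (stokes : ∀ (e : E k) (α : I (k + 1)), pair k e (bd k α) = pair (k + 1) (d k e) α)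
    (int_triv : ∀ e : E (k + 1), (∀ β, pair (k + 1) e β ∈ intSub 𝕂) → e = 0) {ω : E k} :
    ω ∈ Ezero bd d pair k ↔ ∀ α ∈ Zc bd k, pair k ω α ∈ intSub 𝕂 := by
  refine ⟨And.right, fun hω => ⟨int_triv _ fun β => ?_, hω⟩⟩
  rw [← stokes]
  exact hω _ (mem_Zc_bd bd hbd k β)

variable {hbd : ∀ k x, bd k (bd (k + 1) x) = 0} {pair : ∀ k, E k →+ (I k →+ 𝕂)}

variable (bd hbd pair) in
/-- The form `ω` is a curvature of the character `f` of the `k`-cycles if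
`f (∂β) ≡ ∫_β ω (mod ℤ)` for every chain `β`. -/
def IsCurvature (f : Zc bd k →+ KmodZ 𝕂) (ω : E (k + 1)) : Prop :=
  ∀ β : I (k + 1), f ⟨bd k β, mem_Zc_bd bd hbd k β⟩ = qZ 𝕂 (pair (k + 1) ω β)

namespace IsCurvature

variable {f g : Zc bd k →+ KmodZ 𝕂} {ω ω' : E (k + 1)}

theorem add (hf : IsCurvature bd hbd pair f ω) (hg : IsCurvature bd hbd pair g ω') :
    IsCurvature bd hbd pair (f + g) (ω + ω') := fun β => by
  rw [AddMonoidHom.add_apply, hf, hg, map_add, AddMonoidHom.add_apply, map_add]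

theorem unique (int_triv : ∀ e : E (k + 1), (∀ β, pair (k + 1) e β ∈ intSub 𝕂) → e = 0)
    (h : IsCurvature bd hbd pair f ω) (h' : IsCurvature bd hbd pair f ω') : ω = ω' := by
  refine sub_eq_zero.mp (int_triv _ fun β => qZ_eq_zero_iff.mp ?_)
  rw [map_sub, AddMonoidHom.sub_apply, map_sub, ← h, ← h', sub_self]

theorem pair_mem_intSub (h : IsCurvature bd hbd pair f ω) {α : I (k + 1)}
    (hα : α ∈ Zc bd (k + 1)) : pair (k + 1) ω α ∈ intSub 𝕂 := by
  have boundary_eq_zero : (⟨bd k α, mem_Zc_bd bd hbd k α⟩ : Zc bd k) = 0 := Subtype.ext hα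
  rw [← qZ_eq_zero_iff, ← h, boundary_eq_zero, map_zero]

end IsCurvature

theorem exists_isCurvature [CharZero 𝕂] {ω : E (k + 1)}
    (hω : ∀ α ∈ Zc bd (k + 1), pair (k + 1) ω α ∈ intSub 𝕂) :
    ∃ f : Zc bd k →+ KmodZ 𝕂, IsCurvature bd hbd pair f ω := by
  obtain ⟨f, hf⟩ := exists_comp_eq_of_ker_le
    ((bd k).codRestrict (Zc bd k) (mem_Zc_bd bd hbd k)) ((qZ 𝕂).comp (pair (k + 1) ω))
    fun α hα => qZ_eq_zero_iff.mpr (hω α (congrArg Subtype.val hα))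
  exact ⟨f, DFunLike.congr_fun hf⟩

theorem existsUnique_isCurvature
    (int_triv : ∀ e : E (k + 1), (∀ β, pair (k + 1) e β ∈ intSub 𝕂) → e = 0)
    {f : Zc bd k →+ KmodZ 𝕂} (hf : f ∈ DiffChar bd hbd pair k) :
    ∃! ω, IsCurvature bd hbd pair f ω :=
  existsUnique_of_exists_of_unique hf fun _ _ => IsCurvature.unique int_triv

/-- The curvature homomorphism `δ₁`, sending a differential character to its unique curvature. -/
def curvature (int_triv : ∀ e : E (k + 1), (∀ β, pair (k + 1) e β ∈ intSub 𝕂) → e = 0) :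
    DiffChar bd hbd pair k →+ E (k + 1) :=
  have curvature_spec (f : DiffChar bd hbd pair k) :=
    (existsUnique_isCurvature int_triv f.2).exists.choose_spec
  AddMonoidHom.mk' (fun f => (existsUnique_isCurvature int_triv f.2).exists.choose) fun f g =>
    (curvature_spec (f + g)).unique int_triv ((curvature_spec f).add (curvature_spec g))

theorem isCurvature_curvature
    (int_triv : ∀ e : E (k + 1), (∀ β, pair (k + 1) e β ∈ intSub 𝕂) → e = 0)
    (f : DiffChar bd hbd pair k) : IsCurvature bd hbd pair f.1 (curvature int_triv f) :=
  (existsUnique_isCurvature int_triv f.2).exists.choose_spec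

theorem exists_curvature_eq [CharZero 𝕂]
    (int_triv : ∀ e : E (k + 1), (∀ β, pair (k + 1) e β ∈ intSub 𝕂) → e = 0) {ω : E (k + 1)}
    (hω : ∀ α ∈ Zc bd (k + 1), pair (k + 1) ω α ∈ intSub 𝕂) :
    ∃ f : DiffChar bd hbd pair k, curvature int_triv f = ω := by
  obtain ⟨f, hf⟩ := exists_isCurvature (hbd := hbd) hω
  exact ⟨⟨f, ω, hf⟩, (isCurvature_curvature int_triv ⟨f, ω, hf⟩).unique int_triv hf⟩

end Curvature

theorem statement1_general
    {𝕂 : Type*} [Field 𝕂] [CharZero 𝕂]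
    (I E : ℕ → Type*)
    [∀ i, AddCommGroup (I i)] [∀ i, AddCommGroup (E i)]
    (bd : ∀ k, I (k + 1) →+ I k)
    (hbd : ∀ k x, bd k (bd (k + 1) x) = 0)
    (d : ∀ k, E k →+ E (k + 1))
    (pair : ∀ k, E k →+ (I k →+ 𝕂))
    (int_triv : ∀ (k : ℕ) (e : E k), (∀ β : I k, pair k e β ∈ intSub 𝕂) → e = 0)
    (stokes : ∀ (k : ℕ) (e : E k) (α : I (k + 1)),
      pair k e (bd k α) = pair (k + 1) (d k e) α)
    (k : ℕ) :
    (∀ f ∈ DiffChar bd hbd pair k, ∃! ω : E (k + 1),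
        ∀ β : I (k + 1), f ⟨bd k β, mem_Zc_bd bd hbd k β⟩ = qZ 𝕂 (pair (k + 1) ω β)) ∧
    ∃ δ₁ : ↥(DiffChar bd hbd pair k) →+ E (k + 1),
      (∀ (f : ↥(DiffChar bd hbd pair k)) (β : I (k + 1)),
          (f : ↥(Zc bd k) →+ KmodZ 𝕂) ⟨bd k β, mem_Zc_bd bd hbd k β⟩
            = qZ 𝕂 (pair (k + 1) (δ₁ f) β)) ∧
      (∀ f, δ₁ f ∈ Ezero bd d pair (k + 1)) ∧
      (∀ ω ∈ Ezero bd d pair (k + 1), ∃ f, δ₁ f = ω) := by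
  refine ⟨fun f => existsUnique_isCurvature (int_triv (k + 1)), curvature (int_triv (k + 1)),
    isCurvature_curvature (int_triv (k + 1)), fun f => ?_,
    fun ω hω => exists_curvature_eq (int_triv (k + 1)) hω.2⟩
  rw [mem_Ezero_iff hbd (stokes (k + 1)) (int_triv (k + 2))]
  exact fun α => (isCurvature_curvature (int_triv (k + 1)) f).pair_mem_intSub

/-- For every differential character `f ∈ Diff^k(𝒞𝒮)` there is a unique
`ω ∈ E^{k+1}` with `f (∂β) ≡ ∫_β ω (mod ℤ)` for all `β ∈ I_{k+1}`; this `ω` lies in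
`E^{k+1}_0`, and the resulting map `δ₁ : Diff^k(𝒞𝒮) → E^{k+1}_0` is a surjective group
homomorphism. -/
theorem statement1
    {𝕂 : Type*} [Field 𝕂] [CharZero 𝕂]
    (I E : ℕ → Type*)
    [∀ i, AddCommGroup (I i)] [∀ i, Module.Free ℤ (I i)]
    [∀ i, AddCommGroup (E i)] [∀ i, Module 𝕂 (E i)]
    (bd : ∀ k, I (k+1) →+ I k)
    (hbd : ∀ k x, bd k (bd (k+1) x) = 0)
    (d : ∀ k, E k →+ E (k+1))
    (hd : ∀ k x, d (k+1) (d k x) = 0)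
    (hdsmul : ∀ (k : ℕ) (c : 𝕂) (e : E k), d k (c • e) = c • d k e)
    (pair : ∀ k, E k →+ (I k →+ 𝕂))
    (pair_smul : ∀ (k : ℕ) (c : 𝕂) (e : E k) (x : I k), pair k (c • e) x = c * pair k e x)
    (pair_injE : ∀ k, Function.Injective (pair k))
    (pair_injI : ∀ (k : ℕ) (x y : I k), (∀ e : E k, pair k e x = pair k e y) → x = y)
    (int_triv : ∀ (k : ℕ) (e : E k), (∀ β : I k, pair k e β ∈ intSub 𝕂) → e = 0)
    (stokes : ∀ (k : ℕ) (e : E k) (α : I (k+1)), pair k e (bd k α) = pair (k+1) (d k e) α)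
    (deRham_inj : ∀ (k : ℕ) (e : E k), d k e = 0 → pair k e ∈ Bc (codiff bd 𝕂) k → e ∈ Bc d k)
    (deRham_surj : ∀ (k : ℕ) (h : I k →+ 𝕂), codiff bd 𝕂 k h = 0 →
      ∃ e : E k, d k e = 0 ∧ h - pair k e ∈ Bc (codiff bd 𝕂) k)
    (k : ℕ) :
    (∀ f ∈ DiffChar bd hbd pair k, ∃! ω : E (k+1),
        ∀ β : I (k+1), f ⟨bd k β, mem_Zc_bd bd hbd k β⟩ = qZ 𝕂 (pair (k+1) ω β)) ∧
    ∃ δ₁ : ↥(DiffChar bd hbd pair k) →+ E (k+1),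
      (∀ (f : ↥(DiffChar bd hbd pair k)) (β : I (k+1)),
          (f : ↥(Zc bd k) →+ KmodZ 𝕂) ⟨bd k β, mem_Zc_bd bd hbd k β⟩
            = qZ 𝕂 (pair (k+1) (δ₁ f) β)) ∧
      (∀ f, δ₁ f ∈ Ezero bd d pair (k+1)) ∧
      (∀ ω ∈ Ezero bd d pair (k+1), ∃ f, δ₁ f = ω) :=
  statement1_general I E bd hbd d pair int_triv stokes k

end
end

section
/- Let (E^•, I_•, ∫) be a Cheeger–Simons model over 𝕂 and k ≥ 0. For f ∈ Diff^k(CS), choose any T ∈ F^k = Hom(I_k, 𝕂) with (q∘T)|_{Z_k(I_•)} = f (such T exists since 𝕂/ℤ is divisible and I_k is free). Then δT = ω̃ − c for a unique ω ∈ E^{k+1} and a unique c ∈ I^{k+1} = Hom(I_{k+1}, ℤ), the cochain c satisfies δc = 0, the cohomology class [c] ∈ H^{k+1}(I^•) is independent of the choice of T, and the resulting map δ₂ : Diff^k(CS) → H^{k+1}(I^•), f ↦ [c], is a surjective group homomorphism. -/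
open AddSubgroup

noncomputable section

/-!
A triple `(T, ω, c)` with `δT = ω̃ - c` is a differential cocycle in the sense of Hopkins and
Singer. These triples form a group that maps onto `Diff^k` by `T ↦ (q ∘ T)|_Z` (extend a character
to `I_k` because `𝕂/ℤ` is divisible, then lift it to `𝕂` because `I_k` is free) and, by the de
Rham property, onto `H^{k+1}(I^•)` by `[c]`. The map `δ₂` exists because the kernel of the first
map lies in that of the second: if `T` is integral on cycles, then `q ∘ T` factors through
`∂ : I_k → I_{k-1}`, hence it equals `q ∘ G ∘ ∂` for some `G : I_{k-1} → 𝕂`, and `T - G ∘ ∂` is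
an integral cochain with the same coboundary as `T`. So `ω` is integral on all chains, `ω = 0`, and
`c` is an integral coboundary.
-/

lemma exists_lift_of_ker_le {A F Q D : Type*} [AddCommGroup A] [AddCommGroup F] [AddCommGroup Q]
    [AddCommGroup D] [Module.Projective ℤ F] [DivisibleBy Q ℤ] {p : Q →+ D}
    (hp : Function.Surjective p) {f : A →+ F} {h : A →+ D} (hfh : f.ker ≤ h.ker) :
    ∃ G : F →+ Q, ∀ x, p (G (f x)) = h x := by
  let _ : DivisibleBy D ℤ := hp.divisibleBy p fun a n => map_zsmul p n a
  obtain ⟨g, hg⟩ := (Module.Baer.of_divisible D).extension_property_addMonoidHom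
    (QuotientAddGroup.kerLift f) (QuotientAddGroup.kerLift_injective f)
    (QuotientAddGroup.lift f.ker h hfh)
  obtain ⟨G, hG⟩ := Module.projective_lifting_property p.toIntLinearMap g.toIntLinearMap hp
  exact ⟨G.toAddMonoidHom, fun x =>
    (LinearMap.congr_fun hG (f x)).trans (DFunLike.congr_fun hg (x : A ⧸ f.ker))⟩

section Quotient

variable {𝕂 : Type*} [Field 𝕂]

lemma qZ_surjective : Function.Surjective (qZ 𝕂) :=
  QuotientAddGroup.mk'_surjective _

lemma qZ_eq_zero_iff_s2 {a : 𝕂} : qZ 𝕂 a = 0 ↔ ∃ n : ℤ, (n : 𝕂) = a := by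
  refine (QuotientAddGroup.eq_zero_iff a).trans ?_
  simp [intSub, mem_zmultiples_iff]

@[simp]
lemma qZ_intCast (n : ℤ) : qZ 𝕂 n = 0 :=
  qZ_eq_zero_iff_s2.2 ⟨n, rfl⟩

end Quotient

section Cohomology

variable {E : ℕ → Type*} [∀ i, AddCommGroup (E i)]

lemma Hmk_surjective (d : ∀ k, E k →+ E (k + 1)) (k : ℕ) :
    Function.Surjective (Hmk d k) :=
  QuotientAddGroup.mk'_surjective _

lemma Hmk_eq_zero_iff {d : ∀ k, E k →+ E (k + 1)} {k : ℕ}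
    {z : (d k).ker} : Hmk d k z = 0 ↔ (z : E k) ∈ Bc d k :=
  (QuotientAddGroup.eq_zero_iff z).trans mem_addSubgroupOf

end Cohomology

section Cochains

variable {𝕂 : Type*} [Field 𝕂] {I : ℕ → Type*} [∀ i, AddCommGroup (I i)]

@[simp]
lemma PhiMap_apply (k : ℕ) (c : I k →+ ℤ) (x : I k) : PhiMap 𝕂 k c x = c x := rfl

lemma PhiMap_injective [CharZero 𝕂] (k : ℕ) : Function.Injective (PhiMap (I := I) 𝕂 k) :=
  fun _ _ h => AddMonoidHom.ext fun x => Int.cast_injective (DFunLike.congr_fun h x)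

lemma mem_range_PhiMap [CharZero 𝕂] {k : ℕ} {h : I k →+ 𝕂} (hh : ∀ x, qZ 𝕂 (h x) = 0) :
    h ∈ (PhiMap 𝕂 k).range := by
  choose c hc using fun x => qZ_eq_zero_iff_s2.1 (hh x)
  refine ⟨AddMonoidHom.mk' c fun x y => ?_, AddMonoidHom.ext hc⟩
  apply Int.cast_injective (α := 𝕂)
  push_cast
  rw [hc, hc, hc, map_add]

variable {bd : ∀ k, I (k + 1) →+ I k}

@[simp]
lemma codiff_apply {A : Type*} [AddCommGroup A] (k : ℕ) (h : I k →+ A) (x : I (k + 1)) :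
    codiff bd A k h x = h (bd k x) := rfl

lemma codiff_codiff (hbd : ∀ k x, bd k (bd (k + 1) x) = 0) {A : Type*} [AddCommGroup A] (k : ℕ)
    (h : I k →+ A) : codiff bd A (k + 1) (codiff bd A k h) = 0 := by
  ext x
  simp [hbd]

lemma codiff_PhiMap (k : ℕ) (c : I k →+ ℤ) :
    codiff bd 𝕂 k (PhiMap 𝕂 k c) = PhiMap 𝕂 (k + 1) (codiff bd ℤ k c) := rfl

lemma exists_qZ_lift [CharZero 𝕂] {k : ℕ} [Module.Projective ℤ (I k)]
    (f : Zc bd k →+ KmodZ 𝕂) : ∃ T : I k →+ 𝕂, ∀ x : Zc bd k, qZ 𝕂 (T x) = f x := by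
  refine exists_lift_of_ker_le qZ_surjective (f := (Zc bd k).subtype) ?_
  rw [ker_subtype]
  exact bot_le

lemma exists_codiff_eq_codiff_PhiMap [CharZero 𝕂] [∀ i, Module.Projective ℤ (I i)]
    (hbd : ∀ k x, bd k (bd (k + 1) x) = 0) :
    ∀ {k : ℕ} {T : I k →+ 𝕂}, (∀ x : Zc bd k, qZ 𝕂 (T x) = 0) →
      ∃ S : I k →+ ℤ, codiff bd 𝕂 k T = codiff bd 𝕂 k (PhiMap 𝕂 k S)
  | 0, T, hT => by
    obtain ⟨S, rfl⟩ := mem_range_PhiMap fun x => hT ⟨x, mem_top x⟩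
    exact ⟨S, rfl⟩
  | n + 1, T, hT => by
    obtain ⟨G, hG⟩ : ∃ G : I n →+ 𝕂, ∀ x, qZ 𝕂 (G (bd n x)) = qZ 𝕂 (T x) :=
      exists_lift_of_ker_le qZ_surjective (h := (qZ 𝕂).comp T) fun x hx => hT ⟨x, hx⟩
    obtain ⟨S, hS⟩ := mem_range_PhiMap (h := T - codiff bd 𝕂 n G) fun x => by simp [hG]
    exact ⟨S, by rw [hS, map_sub, codiff_codiff hbd, sub_zero]⟩

end Cochains

section CheegerSimons

variable {𝕂 : Type*} [Field 𝕂] {I E : ℕ → Type*} [∀ i, AddCommGroup (I i)]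
  [∀ i, AddCommGroup (E i)] {bd : ∀ k, I (k + 1) →+ I k} {d : ∀ k, E k →+ E (k + 1)}
  {pair : ∀ k, E k →+ (I k →+ 𝕂)} {k : ℕ}

lemma eq_zero_of_pair_sub_PhiMap_eq_zero [CharZero 𝕂]
    (int_triv : ∀ (k : ℕ) (e : E k), (∀ β : I k, pair k e β ∈ intSub 𝕂) → e = 0)
    {ω : E k} {c : I k →+ ℤ} (h : pair k ω - PhiMap 𝕂 k c = 0) : ω = 0 ∧ c = 0 := by
  have hω : ω = 0 := int_triv k ω fun β => by
    rw [sub_eq_zero.1 h]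
    exact (QuotientAddGroup.eq_zero_iff _).1 (qZ_intCast (c β))
  refine ⟨hω, PhiMap_injective (𝕂 := 𝕂) k ?_⟩
  rw [map_zero, ← sub_eq_zero.1 h, hω, map_zero]

lemma exists_codiff_eq_pair_sub_PhiMap [CharZero 𝕂] {hbd : ∀ k x, bd k (bd (k + 1) x) = 0}
    {f : Zc bd k →+ KmodZ 𝕂} (hf : f ∈ DiffChar bd hbd pair k) {T : I k →+ 𝕂}
    (hT : ∀ x : Zc bd k, qZ 𝕂 (T x) = f x) :
    ∃ (ω : E (k + 1)) (c : I (k + 1) →+ ℤ),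
      codiff bd 𝕂 k T = pair (k + 1) ω - PhiMap 𝕂 (k + 1) c := by
  obtain ⟨ω, hω⟩ := hf
  obtain ⟨c, hc⟩ := mem_range_PhiMap (h := pair (k + 1) ω - codiff bd 𝕂 k T) fun β => by
    rw [AddMonoidHom.sub_apply, map_sub, codiff_apply, ← hω β, hT ⟨bd k β, mem_Zc_bd bd hbd k β⟩,
      sub_self]
  exact ⟨ω, c, by rw [hc, sub_sub_cancel]⟩

lemma existsUnique_codiff_eq_pair_sub_PhiMap [CharZero 𝕂]
    {hbd : ∀ k x, bd k (bd (k + 1) x) = 0}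
    (int_triv : ∀ (k : ℕ) (e : E k), (∀ β : I k, pair k e β ∈ intSub 𝕂) → e = 0)
    {f : Zc bd k →+ KmodZ 𝕂} (hf : f ∈ DiffChar bd hbd pair k) {T : I k →+ 𝕂}
    (hT : ∀ x : Zc bd k, qZ 𝕂 (T x) = f x) :
    ∃! p : E (k + 1) × (I (k + 1) →+ ℤ),
      codiff bd 𝕂 k T = pair (k + 1) p.1 - PhiMap 𝕂 (k + 1) p.2 := by
  obtain ⟨ω, c, h⟩ := exists_codiff_eq_pair_sub_PhiMap hf hT
  refine ⟨(ω, c), h, ?_⟩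
  rintro ⟨ω', c'⟩ h'
  have hsub : pair (k + 1) (ω' - ω) - PhiMap 𝕂 (k + 1) (c' - c) = 0 := by
    rw [map_sub, map_sub, sub_sub_sub_comm, ← h', ← h, sub_self]
  obtain ⟨hω, hc⟩ := eq_zero_of_pair_sub_PhiMap_eq_zero int_triv hsub
  exact Prod.ext (sub_eq_zero.1 hω) (sub_eq_zero.1 hc)

lemma mem_ker_codiff_of_codiff_eq [CharZero 𝕂] (hbd : ∀ k x, bd k (bd (k + 1) x) = 0)
    (int_triv : ∀ (k : ℕ) (e : E k), (∀ β : I k, pair k e β ∈ intSub 𝕂) → e = 0)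
    (stokes : ∀ (k : ℕ) (e : E k) (α : I (k + 1)), pair k e (bd k α) = pair (k + 1) (d k e) α)
    {T : I k →+ 𝕂} {ω : E (k + 1)} {c : I (k + 1) →+ ℤ}
    (h : codiff bd 𝕂 k T = pair (k + 1) ω - PhiMap 𝕂 (k + 1) c) :
    c ∈ (codiff bd ℤ (k + 1)).ker := by
  have hω : codiff bd 𝕂 (k + 1) (pair (k + 1) ω) = pair (k + 2) (d (k + 1) ω) :=
    AddMonoidHom.ext (stokes (k + 1) ω)
  have hsub : pair (k + 2) (d (k + 1) ω) - PhiMap 𝕂 (k + 2) (codiff bd ℤ (k + 1) c) = 0 := by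
    rw [← hω, ← codiff_PhiMap, ← map_sub, ← h, codiff_codiff hbd]
  exact (eq_zero_of_pair_sub_PhiMap_eq_zero int_triv hsub).2

variable (bd pair k) in
/-- Differential cocycles (after Hopkins and Singer): triples `(T, ω, c)` with `δT = ω̃ - c`. They
carry the choices made in the construction of `δ₂`. Closedness of `ω` and `c` is not imposed: it
follows from the properties of the pairing. -/
def DiffCocycle : AddSubgroup ((I k →+ 𝕂) × E (k + 1) × (I (k + 1) →+ ℤ)) where
  carrier := {t | codiff bd 𝕂 k t.1 = pair (k + 1) t.2.1 - PhiMap 𝕂 (k + 1) t.2.2}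
  zero_mem' := by simp
  add_mem' {t t'} (ht ht') := by simp [ht.out, ht'.out, add_sub_add_comm]
  neg_mem' {t} (ht) := by simp [ht.out, neg_add_eq_sub]

namespace DiffCocycle

/-- The differential character `(q ∘ T)|_Z` of a differential cocycle `(T, ω, c)`. -/
def toDiffChar (hbd : ∀ k x, bd k (bd (k + 1) x) = 0) :
    DiffCocycle bd pair k →+ DiffChar bd hbd pair k where
  toFun t := ⟨((qZ 𝕂).comp t.1.1).comp (Zc bd k).subtype, t.1.2.1, fun β => by
    have h : t.1.1 (bd k β) = pair (k + 1) t.1.2.1 β - t.1.2.2 β := DFunLike.congr_fun t.2 β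
    simp [h]⟩
  map_zero' := by ext; simp
  map_add' t t' := by ext; simp

lemma toDiffChar_eq_iff {hbd : ∀ k x, bd k (bd (k + 1) x) = 0} {t : DiffCocycle bd pair k}
    {f : DiffChar bd hbd pair k} :
    toDiffChar hbd t = f ↔ ∀ x : Zc bd k, qZ 𝕂 (t.1.1 x) = f.1 x :=
  Subtype.ext_iff.trans DFunLike.ext_iff

lemma toDiffChar_surjective [CharZero 𝕂] [Module.Projective ℤ (I k)]
    (hbd : ∀ k x, bd k (bd (k + 1) x) = 0) :
    Function.Surjective (toDiffChar (pair := pair) (k := k) hbd) := fun f => by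
  obtain ⟨T, hT⟩ := exists_qZ_lift f.1
  obtain ⟨ω, c, h⟩ := exists_codiff_eq_pair_sub_PhiMap f.2 hT
  exact ⟨⟨(T, ω, c), h⟩, toDiffChar_eq_iff.2 hT⟩

/-- The characteristic class `[c]` of a differential cocycle `(T, ω, c)`. -/
def charClass [CharZero 𝕂] (hbd : ∀ k x, bd k (bd (k + 1) x) = 0)
    (int_triv : ∀ (k : ℕ) (e : E k), (∀ β : I k, pair k e β ∈ intSub 𝕂) → e = 0)
    (stokes : ∀ (k : ℕ) (e : E k) (α : I (k + 1)), pair k e (bd k α) = pair (k + 1) (d k e) α) :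
    DiffCocycle bd pair k →+ Hc (codiff bd ℤ) (k + 1) :=
  (Hmk (codiff bd ℤ) (k + 1)).comp
    { toFun t := ⟨t.1.2.2, mem_ker_codiff_of_codiff_eq hbd int_triv stokes t.2⟩
      map_zero' := rfl
      map_add' _ _ := rfl }

lemma charClass_surjective [CharZero 𝕂] (hbd : ∀ k x, bd k (bd (k + 1) x) = 0)
    (int_triv : ∀ (k : ℕ) (e : E k), (∀ β : I k, pair k e β ∈ intSub 𝕂) → e = 0)
    (stokes : ∀ (k : ℕ) (e : E k) (α : I (k + 1)), pair k e (bd k α) = pair (k + 1) (d k e) α)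
    (deRham_surj : ∀ (k : ℕ) (h : I k →+ 𝕂), codiff bd 𝕂 k h = 0 →
      ∃ e : E k, h - pair k e ∈ Bc (codiff bd 𝕂) k) :
    Function.Surjective (charClass (k := k) hbd int_triv stokes) := fun y => by
  obtain ⟨⟨c, hc⟩, rfl⟩ := Hmk_surjective _ _ y
  have hclosed : codiff bd 𝕂 (k + 1) (PhiMap 𝕂 (k + 1) c) = 0 := by
    rw [codiff_PhiMap, AddMonoidHom.mem_ker.1 hc, map_zero]
  obtain ⟨ω, T, hT⟩ := deRham_surj (k + 1) _ hclosed
  have h : codiff bd 𝕂 k (-T) = pair (k + 1) ω - PhiMap 𝕂 (k + 1) c := by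
    rw [map_neg, hT, neg_sub]
  exact ⟨⟨(-T, ω, c), h⟩, rfl⟩

lemma ker_toDiffChar_le_ker_charClass [CharZero 𝕂] [∀ i, Module.Projective ℤ (I i)]
    (hbd : ∀ k x, bd k (bd (k + 1) x) = 0)
    (int_triv : ∀ (k : ℕ) (e : E k), (∀ β : I k, pair k e β ∈ intSub 𝕂) → e = 0)
    (stokes : ∀ (k : ℕ) (e : E k) (α : I (k + 1)), pair k e (bd k α) = pair (k + 1) (d k e) α) :
    (toDiffChar (k := k) hbd).ker ≤ (charClass hbd int_triv stokes).ker := by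
  rintro ⟨⟨T, ω, c⟩, h⟩ ht
  obtain ⟨S, hS⟩ := exists_codiff_eq_codiff_PhiMap hbd (toDiffChar_eq_iff.1 ht)
  have hsub : pair (k + 1) ω - PhiMap 𝕂 (k + 1) (c + codiff bd ℤ k S) = 0 := by
    rw [map_add, ← sub_sub, ← codiff_PhiMap, ← hS, ← h.out, sub_self]
  have hc : c = codiff bd ℤ k (-S) := by
    rw [map_neg]
    exact eq_neg_of_add_eq_zero_left (eq_zero_of_pair_sub_PhiMap_eq_zero int_triv hsub).2
  exact Hmk_eq_zero_iff.2 ⟨-S, hc.symm⟩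

end DiffCocycle

end CheegerSimons

theorem statement2_general
    {𝕂 : Type*} [Field 𝕂] [CharZero 𝕂] {I E : ℕ → Type*}
    [∀ i, AddCommGroup (I i)] [∀ i, Module.Projective ℤ (I i)] [∀ i, AddCommGroup (E i)]
    (bd : ∀ k, I (k + 1) →+ I k) (hbd : ∀ k x, bd k (bd (k + 1) x) = 0)
    (d : ∀ k, E k →+ E (k + 1)) (pair : ∀ k, E k →+ (I k →+ 𝕂))
    (int_triv : ∀ (k : ℕ) (e : E k), (∀ β : I k, pair k e β ∈ intSub 𝕂) → e = 0)
    (stokes : ∀ (k : ℕ) (e : E k) (α : I (k + 1)), pair k e (bd k α) = pair (k + 1) (d k e) α)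
    (deRham_surj : ∀ (k : ℕ) (h : I k →+ 𝕂), codiff bd 𝕂 k h = 0 →
      ∃ e : E k, h - pair k e ∈ Bc (codiff bd 𝕂) k)
    (k : ℕ) :
    (∀ f ∈ DiffChar bd hbd pair k, ∃ T : I k →+ 𝕂, ∀ x : ↥(Zc bd k), qZ 𝕂 (T x) = f x) ∧
    (∀ f ∈ DiffChar bd hbd pair k, ∀ T : I k →+ 𝕂, (∀ x : ↥(Zc bd k), qZ 𝕂 (T x) = f x) →
      ∃! p : E (k + 1) × (I (k + 1) →+ ℤ),
        codiff bd 𝕂 k T = pair (k + 1) p.1 - PhiMap 𝕂 (k + 1) p.2) ∧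
    (∀ (T : I k →+ 𝕂) (ω : E (k + 1)) (c : I (k + 1) →+ ℤ),
        codiff bd 𝕂 k T = pair (k + 1) ω - PhiMap 𝕂 (k + 1) c →
        c ∈ (codiff bd ℤ (k + 1)).ker) ∧
    ∃ δ₂ : ↥(DiffChar bd hbd pair k) →+ Hc (codiff bd ℤ) (k + 1),
      (∀ (f : ↥(DiffChar bd hbd pair k)) (T : I k →+ 𝕂) (ω : E (k + 1))
          (c : I (k + 1) →+ ℤ) (hc : c ∈ (codiff bd ℤ (k + 1)).ker),
          (∀ x : ↥(Zc bd k), qZ 𝕂 (T x) = (f : ↥(Zc bd k) →+ KmodZ 𝕂) x) →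
          codiff bd 𝕂 k T = pair (k + 1) ω - PhiMap 𝕂 (k + 1) c →
          δ₂ f = Hmk (codiff bd ℤ) (k + 1) ⟨c, hc⟩) ∧
      Function.Surjective δ₂ := by
  refine ⟨fun f _ => exists_qZ_lift f,
    fun f hf T hT => existsUnique_codiff_eq_pair_sub_PhiMap int_triv hf hT,
    fun T ω c h => mem_ker_codiff_of_codiff_eq hbd int_triv stokes h, ?_⟩
  let χ := DiffCocycle.charClass (k := k) hbd int_triv stokes
  have hsurj := DiffCocycle.toDiffChar_surjective (pair := pair) (k := k) hbd
  let δ₂ := AddMonoidHom.liftOfSurjective _ hsurj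
    ⟨χ, DiffCocycle.ker_toDiffChar_le_ker_charClass hbd int_triv stokes⟩
  have hδ₂ : ∀ t, δ₂ (DiffCocycle.toDiffChar hbd t) = χ t :=
    AddMonoidHom.liftOfRightInverse_comp_apply _ _ _ _
  refine ⟨δ₂, fun f T ω c hc hT h => ?_, fun y => ?_⟩
  · rw [← DiffCocycle.toDiffChar_eq_iff (t := ⟨(T, ω, c), h⟩) |>.2 hT, hδ₂]
    rfl
  · obtain ⟨t, rfl⟩ := DiffCocycle.charClass_surjective hbd int_triv stokes deRham_surj y
    exact ⟨DiffCocycle.toDiffChar hbd t, hδ₂ t⟩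

/-- For `f ∈ Diff^k(𝒞𝒮)` and any lift `T ∈ F^k = Hom(I_k, 𝕂)` of `f`
(which exists), `δT = ω̃ - c` for a unique pair `(ω, c) ∈ E^{k+1} × I^{k+1}`; the cochain
`c` is closed, its class `[c] ∈ H^{k+1}(I^•)` is independent of all choices, and the
resulting map `δ₂ : Diff^k(𝒞𝒮) → H^{k+1}(I^•)` is a surjective group homomorphism. -/
theorem statement2
    {𝕂 : Type*} [Field 𝕂] [CharZero 𝕂]
    (I E : ℕ → Type*)
    [∀ i, AddCommGroup (I i)] [∀ i, Module.Free ℤ (I i)]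
    [∀ i, AddCommGroup (E i)] [∀ i, Module 𝕂 (E i)]
    (bd : ∀ k, I (k+1) →+ I k)
    (hbd : ∀ k x, bd k (bd (k+1) x) = 0)
    (d : ∀ k, E k →+ E (k+1))
    (hd : ∀ k x, d (k+1) (d k x) = 0)
    (hdsmul : ∀ (k : ℕ) (c : 𝕂) (e : E k), d k (c • e) = c • d k e)
    (pair : ∀ k, E k →+ (I k →+ 𝕂))
    (pair_smul : ∀ (k : ℕ) (c : 𝕂) (e : E k) (x : I k), pair k (c • e) x = c * pair k e x)
    (pair_injE : ∀ k, Function.Injective (pair k))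
    (pair_injI : ∀ (k : ℕ) (x y : I k), (∀ e : E k, pair k e x = pair k e y) → x = y)
    (int_triv : ∀ (k : ℕ) (e : E k), (∀ β : I k, pair k e β ∈ intSub 𝕂) → e = 0)
    (stokes : ∀ (k : ℕ) (e : E k) (α : I (k+1)), pair k e (bd k α) = pair (k+1) (d k e) α)
    (deRham_inj : ∀ (k : ℕ) (e : E k), d k e = 0 → pair k e ∈ Bc (codiff bd 𝕂) k → e ∈ Bc d k)
    (deRham_surj : ∀ (k : ℕ) (h : I k →+ 𝕂), codiff bd 𝕂 k h = 0 →
      ∃ e : E k, d k e = 0 ∧ h - pair k e ∈ Bc (codiff bd 𝕂) k)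
    (k : ℕ) :
    (∀ f ∈ DiffChar bd hbd pair k, ∃ T : I k →+ 𝕂, ∀ x : ↥(Zc bd k), qZ 𝕂 (T x) = f x) ∧
    (∀ f ∈ DiffChar bd hbd pair k, ∀ T : I k →+ 𝕂, (∀ x : ↥(Zc bd k), qZ 𝕂 (T x) = f x) →
      ∃! p : E (k+1) × (I (k+1) →+ ℤ),
        codiff bd 𝕂 k T = pair (k+1) p.1 - PhiMap 𝕂 (k+1) p.2) ∧
    (∀ (T : I k →+ 𝕂) (ω : E (k+1)) (c : I (k+1) →+ ℤ),
        codiff bd 𝕂 k T = pair (k+1) ω - PhiMap 𝕂 (k+1) c →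
        c ∈ (codiff bd ℤ (k+1)).ker) ∧
    ∃ δ₂ : ↥(DiffChar bd hbd pair k) →+ Hc (codiff bd ℤ) (k+1),
      (∀ (f : ↥(DiffChar bd hbd pair k)) (T : I k →+ 𝕂) (ω : E (k+1))
          (c : I (k+1) →+ ℤ) (hc : c ∈ (codiff bd ℤ (k+1)).ker),
          (∀ x : ↥(Zc bd k), qZ 𝕂 (T x) = (f : ↥(Zc bd k) →+ KmodZ 𝕂) x) →
          codiff bd 𝕂 k T = pair (k+1) ω - PhiMap 𝕂 (k+1) c →
          δ₂ f = Hmk (codiff bd ℤ) (k+1) ⟨c, hc⟩) ∧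
      Function.Surjective δ₂ :=
  statement2_general bd hbd d pair int_triv stokes
    (fun k h hh => (deRham_surj k h hh).imp fun _ => And.right) k

end
end
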